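/- arXiv:2602.12334 — 5 statements merged into one kernel-verified Lean document; each statement's English description precedes it below -/
import Mathlib

section
/- Let L be a finite Boolean algebra with n atoms and R a pre-probability on L. Then there exists a semantic frame for R consisting only of atoms of L; consequently the semantic dimension of R (the common cardinality of its semantic frames) is at most n. -/
open scoped Classical

/-- A pre-probability on a Boolean algebra: `R ⊥ = 0` and `R` is additive on disjoint joins. -/
def IsPreProb {L : Type*} [BooleanAlgebra L] (R : L → ℂ) : Prop :=
  R ⊥ = 0 ∧ ∀ s t : L, s ⊓ t = ⊥ → R (s ⊔ t) = R s + R t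

/-- A semantic frame for `R`: a finite set of statements whose `R`-values are
`ℚ`-linearly independent, maximal among subsets of `L` with this property. -/
def IsSemanticFrame {L : Type*} [BooleanAlgebra L] (R : L → ℂ) (S : Finset L) : Prop :=
  LinearIndependent ℚ (fun s : S => R s) ∧
    ∀ T : Finset L, S ⊆ T → LinearIndependent ℚ (fun t : T => R t) → T = S

/-! Peeling off one atom at a time writes every element as a disjoint join of atoms, so the values
of a pre-probability lie in the span of its values on atoms. Semantic frames are the finite sets on
which the values form a basis of the span of all values; hence they all have the same cardinality,
and a basis extracted from the values on atoms yields a semantic frame. -/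

theorem apply_mem_closure_image_isAtom {L M : Type*} [GeneralizedBooleanAlgebra L]
    [WellFoundedLT L] [AddMonoid M] {f : L → M} (map_bot : f ⊥ = 0)
    (map_sup : ∀ s t, Disjoint s t → f (s ⊔ t) = f s + f t) (x : L) :
    f x ∈ AddSubmonoid.closure (f '' {a | IsAtom a}) := by
  have : IsAtomic L := isAtomic_of_orderBot_wellFounded_lt wellFounded_lt
  induction x using WellFoundedLT.induction with
  | ind x ih =>
    obtain rfl | ⟨a, ha, hax⟩ := eq_bot_or_exists_atom_le x
    · exact map_bot ▸ zero_mem _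
    · have hfx : f x = f a + f (x \ a) := by
        rw [← map_sup a (x \ a) disjoint_sdiff_self_right, sup_sdiff_cancel_right hax]
      rw [hfx]
      exact add_mem (AddSubmonoid.subset_closure ⟨a, ha, rfl⟩) (ih _ (sdiff_lt hax ha.ne_bot))

section LinearIndepOn

variable {ι K V : Type*} [DivisionRing K] [AddCommGroup V] [Module K V] {v : ι → V} {S : Finset ι}

theorem maximal_linearIndepOn_finset_iff :
    Maximal (fun T : Finset ι => LinearIndepOn K v T) S ↔
      LinearIndepOn K v S ∧ ∀ i, v i ∈ Submodule.span K (v '' S) := by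
  refine and_congr_right fun hS => ⟨fun hmax i => ?_, fun hspan T hT hST i hi => ?_⟩
  · refine hS.mem_span_iff.2 fun hi => ?_
    rw [← Finset.coe_insert] at hi
    exact hmax hi (Finset.subset_insert i S) (Finset.mem_insert_self i S)
  · exact hS.mem_span_iff.1 (hspan i) (hT.mono (Set.insert_subset hi hST))

theorem finrank_span_range_eq_card_of_maximal_linearIndepOn
    (hS : Maximal (fun T : Finset ι => LinearIndepOn K v T) S) :
    Module.finrank K (Submodule.span K (Set.range v)) = S.card := by
  obtain ⟨hli, hspan⟩ := maximal_linearIndepOn_finset_iff.1 hS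
  have hspan_eq : Submodule.span K (Set.range v) = Submodule.span K (v '' S) :=
    le_antisymm (Submodule.span_le.2 (Set.range_subset_iff.2 hspan))
      (Submodule.span_mono (Set.image_subset_range v S))
  rw [hspan_eq, Set.image_eq_range]
  exact (finrank_span_eq_card hli).trans (Fintype.card_coe S)

end LinearIndepOn

section SemanticFrame

variable {L : Type*} [BooleanAlgebra L] {R : L → ℂ} {S T : Finset L}

theorem IsPreProb.mem_span_image_isAtom [Finite L] (hR : IsPreProb R) (x : L) :
    R x ∈ Submodule.span ℚ (R '' {a | IsAtom a}) :=
  Submodule.closure_subset_span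
    (apply_mem_closure_image_isAtom hR.1 (fun s t hst => hR.2 s t hst.eq_bot) x)

theorem isSemanticFrame_iff_maximal :
    IsSemanticFrame R S ↔ Maximal (fun T : Finset L => LinearIndepOn ℚ R T) S :=
  and_congr_right fun _ =>
    ⟨fun h T hT hST => (h T hST hT).le, fun h _ hST hT => (h hT hST).antisymm hST⟩

theorem IsSemanticFrame.card_eq (hS : IsSemanticFrame R S) (hT : IsSemanticFrame R T) :
    S.card = T.card := by
  rw [← finrank_span_range_eq_card_of_maximal_linearIndepOn (isSemanticFrame_iff_maximal.1 hS),
    finrank_span_range_eq_card_of_maximal_linearIndepOn (isSemanticFrame_iff_maximal.1 hT)]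

theorem IsPreProb.exists_isSemanticFrame_isAtom [Finite L] (hR : IsPreProb R) :
    ∃ S : Finset L, IsSemanticFrame R S ∧ ∀ s ∈ S, IsAtom s := by
  obtain ⟨b, hb_atom, -, hspan, hli⟩ := exists_linearIndepOn_extension (linearIndepOn_empty ℚ R)
    (Set.empty_subset {a : L | IsAtom a})
  lift b to Finset L using b.toFinite
  refine ⟨b, isSemanticFrame_iff_maximal.2 (maximal_linearIndepOn_finset_iff.2 ⟨hli, fun x => ?_⟩),
    hb_atom⟩
  exact Submodule.span_le.2 hspan (hR.mem_span_image_isAtom x)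

end SemanticFrame

theorem stmt_8 {L : Type*} [BooleanAlgebra L] [Fintype L]
    (R : L → ℂ) (hR : IsPreProb R)
    (n : ℕ) (hn : (Finset.univ.filter (fun a : L => IsAtom a)).card = n) :
    (∃ S : Finset L, IsSemanticFrame R S ∧ (∀ s ∈ S, IsAtom s) ∧ S.card ≤ n) ∧
    ∀ T : Finset L, IsSemanticFrame R T → T.card ≤ n := by
  obtain ⟨S, hS, hS_atom⟩ := hR.exists_isSemanticFrame_isAtom
  have hS_card : S.card ≤ n :=
    hn ▸ Finset.card_le_card fun s hs => Finset.mem_filter_univ s |>.2 (hS_atom s hs)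
  exact ⟨⟨S, hS, hS_atom, hS_card⟩, fun T hT => (hT.card_eq hS).trans_le hS_card⟩
end

section
/- Let L be a finite Boolean algebra, R a pre-probability on L, S a semantic frame for R, and a : ℂ → ℂ a map satisfying a(x+y) = a(x) + a(y) for all x, y. If a(R(s)) = R(s) for every s ∈ S, then a(R(s)) = R(s) for every s ∈ L; that is, two pre-probability representations related by an a-function that agree on a semantic frame agree everywhere. -/
theorem mem_span_image_of_maximal_linearIndepOn {K V ι : Type*} [DivisionRing K]
    [AddCommGroup V] [Module K V] {v : ι → V} {s : Set ι}
    (hs : Maximal (LinearIndepOn K v) s) (i : ι) : v i ∈ Submodule.span K (v '' s) :=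
  hs.prop.mem_span_iff.2 hs.mem_of_prop_insert

theorem IsSemanticFrame.maximal_linearIndepOn {L : Type*} [BooleanAlgebra L] {R : L → ℂ}
    {S : Finset L} (hS : IsSemanticFrame R S) : Maximal (LinearIndepOn ℚ R) (S : Set L) := by
  classical
  refine (Set.maximal_iff_forall_insert fun _ _ ht hst => ht.mono hst).2
    ⟨hS.1, fun t ht hins => ht ?_⟩
  have insert_eq : insert t S = S :=
    hS.2 _ (Finset.subset_insert t S) (by rwa [← Finset.coe_insert] at hins)
  exact Finset.insert_eq_self.1 insert_eq

theorem stmt_9_general {ι V W : Type*} [AddCommGroup V] [Module ℚ V] [AddCommGroup W] [Module ℚ W]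
    {v : ι → V} {s : Set ι} (hs : Maximal (LinearIndepOn ℚ v) s) (f g : V →+ W)
    (hfg : ∀ i ∈ s, f (v i) = g (v i)) (i : ι) : f (v i) = g (v i) := by
  have eqOn_image : Set.EqOn f.toRatLinearMap g.toRatLinearMap (v '' s) :=
    Set.forall_mem_image.2 hfg
  exact LinearMap.eqOn_span eqOn_image (mem_span_image_of_maximal_linearIndepOn hs i)

theorem stmt_9 {L : Type*} [BooleanAlgebra L] [Fintype L]
    (R : L → ℂ) (hR : IsPreProb R)
    (S : Finset L) (hS : IsSemanticFrame R S)
    (a : ℂ → ℂ) (hadd : ∀ x y : ℂ, a (x + y) = a x + a y)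
    (hfix : ∀ s ∈ S, a (R s) = R s) :
    ∀ s : L, a (R s) = R s :=
  stmt_9_general hS.maximal_linearIndepOn (AddMonoidHom.mk' a hadd) (AddMonoidHom.id ℂ) hfix
end

section
/- Let L be a finite Boolean algebra, R a pre-probability on L, and s₁, …, sₙ ∈ L pairwise disjoint elements (sⱼ ∧ sₖ = ⊥ for j ≠ k) with s₁ ∨ ⋯ ∨ sₙ = ⊤. Suppose for each j we are given a function Rⱼ : L → ℂ and a map aⱼ : ℂ → ℂ satisfying aⱼ(x + y) = aⱼ(x) + aⱼ(y) for all x, y, such that aⱼ(Rⱼ(t)) = R(t) for every t ≤ sⱼ. Then for every s ∈ L, R(s) = Σⱼ aⱼ(Rⱼ(s ∧ sⱼ)). -/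
section DisjointAdditive

variable {L M ι : Type*} [AddCommMonoid M] {R : L → M} {J : Finset ι} {p : ι → L}

theorem map_finset_sup_eq_sum_of_supIndep [Lattice L] [OrderBot L] (map_bot : R ⊥ = 0)
    (map_sup : ∀ s t, Disjoint s t → R (s ⊔ t) = R s + R t) (hp : J.SupIndep p) :
    R (J.sup p) = ∑ j ∈ J, R (p j) := by
  induction J using Finset.cons_induction with
  | empty => rw [Finset.sup_empty, Finset.sum_empty, map_bot]
  | cons j J hj ih =>
    have hJ : J ⊆ J.cons j hj := Finset.subset_cons hj
    have disjoint_sup : Disjoint (p j) (J.sup p) := hp hJ (Finset.mem_cons_self j J) hj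
    rw [Finset.sup_cons, Finset.sum_cons, map_sup _ _ disjoint_sup, ih (hp.subset hJ)]

variable [DistribLattice L] [OrderBot L]

theorem map_eq_sum_map_inf_of_le_sup (map_bot : R ⊥ = 0)
    (map_sup : ∀ s t, Disjoint s t → R (s ⊔ t) = R s + R t)
    (hp : (J : Set ι).PairwiseDisjoint p) {s : L} (hs : s ≤ J.sup p) :
    R s = ∑ j ∈ J, R (s ⊓ p j) := by
  have inf_supIndep : J.SupIndep fun j => s ⊓ p j := hp.supIndep.mono fun _ _ => inf_le_right
  calc
    R s = R (s ⊓ J.sup p) := by rw [inf_eq_left.2 hs]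
    _ = R (J.sup fun j => s ⊓ p j) := by rw [Finset.sup_inf_distrib_left]
    _ = ∑ j ∈ J, R (s ⊓ p j) := map_finset_sup_eq_sum_of_supIndep map_bot map_sup inf_supIndep

theorem stmt_10_general {N : ι → Type*} (map_bot : R ⊥ = 0)
    (map_sup : ∀ s t, Disjoint s t → R (s ⊔ t) = R s + R t)
    (hp : (J : Set ι).PairwiseDisjoint p) (Rloc : ∀ j, L → N j) (a : ∀ j, N j → M)
    (hsync : ∀ j ∈ J, ∀ t ≤ p j, a j (Rloc j t) = R t) {s : L} (hs : s ≤ J.sup p) :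
    R s = ∑ j ∈ J, a j (Rloc j (s ⊓ p j)) := by
  rw [map_eq_sum_map_inf_of_le_sup map_bot map_sup hp hs]
  exact Finset.sum_congr rfl fun j hj => (hsync j hj _ inf_le_right).symm

end DisjointAdditive

theorem stmt_10 {L : Type*} [BooleanAlgebra L] [Fintype L]
    (R : L → ℂ) (hR : IsPreProb R)
    (n : ℕ) (p : Fin n → L)
    (hdisj : ∀ j k : Fin n, j ≠ k → p j ⊓ p k = ⊥)
    (hcover : Finset.univ.sup p = ⊤)
    (Rloc : Fin n → L → ℂ) (a : Fin n → ℂ → ℂ)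
    (hadd : ∀ (j : Fin n) (x y : ℂ), a j (x + y) = a j x + a j y)
    (hsync : ∀ j : Fin n, ∀ t : L, t ≤ p j → a j (Rloc j t) = R t) :
    ∀ s : L, R s = ∑ j : Fin n, a j (Rloc j (s ⊓ p j)) := fun _ =>
  stmt_10_general hR.1 (fun s t hst => hR.2 s t hst.eq_bot)
    (fun j _ k _ hjk => disjoint_iff.2 (hdisj j k hjk)) Rloc a (fun j _ => hsync j)
    (le_top.trans_eq hcover.symm)
end

section
/- Let L be a finite Boolean algebra, t ∈ L, and let Q, R' : L → ℂ be pre-probabilities. Suppose there is a map a : ℂ → ℂ with a(x + y) = a(x) + a(y) for all x, y such that a(R'(u)) = Q(u) for every u ≤ t, and suppose the ℚ-linear span of {R'(u) : u ≤ t} has dimension at most 1 over ℚ. Let s' ≤ t with R'(s') ≠ 0. Then for every u ≤ t, Q(u) · R'(s') = R'(u) · Q(s'); equivalently, Q(u) = R'(u) · Q(s')/R'(s'). -/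
theorem eq_span_singleton_of_rank_le_one {k V : Type*} [DivisionRing k] [AddCommGroup V]
    [Module k V] {W : Submodule k V} (hW : Module.rank k W ≤ 1) {x : V} (hxW : x ∈ W)
    (hx : x ≠ 0) : W = Submodule.span k {x} := by
  obtain ⟨v, -, hWv⟩ := (rank_submodule_le_one_iff W).mp hW
  obtain ⟨c, rfl⟩ := Submodule.mem_span_singleton.mp (hWv hxW)
  have hc : c ≠ 0 := (smul_ne_zero_iff.mp hx).1
  refine le_antisymm ?_ ((Submodule.span_singleton_le_iff_mem _ _).mpr hxW)
  rwa [Submodule.span_singleton_smul_eq hc.isUnit]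

theorem map_mul_eq_mul_map_of_mem_span_singleton {k A : Type*} [CommSemiring k]
    [CommSemiring A] [Algebra k A] (f : A →ₗ[k] A) {x y : A}
    (hy : y ∈ Submodule.span k {x}) : f y * x = y * f x := by
  obtain ⟨c, rfl⟩ := Submodule.mem_span_singleton.mp hy
  rw [map_smul, smul_mul_assoc, smul_mul_assoc, mul_comm]

theorem stmt_18_general {ι k K : Type*} [Field k] [Field K] [Algebra k K] (S : Set ι)
    (Q R : ι → K) (a : K →ₗ[k] K) (hsync : ∀ u ∈ S, a (R u) = Q u)
    (hdim : Module.rank k (Submodule.span k (R '' S)) ≤ 1)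
    (s : ι) (hs : s ∈ S) (hne : R s ≠ 0) :
    ∀ u ∈ S, Q u * R s = R u * Q s ∧ Q u = R u * Q s / R s := by
  intro u hu
  have mem_span {w : ι} (hw : w ∈ S) : R w ∈ Submodule.span k (R '' S) :=
    Submodule.subset_span (Set.mem_image_of_mem R hw)
  have hmem : R u ∈ Submodule.span k {R s} :=
    eq_span_singleton_of_rank_le_one hdim (mem_span hs) hne ▸ mem_span hu
  have hcross : Q u * R s = R u * Q s := by
    rw [← hsync u hu, ← hsync s hs, map_mul_eq_mul_map_of_mem_span_singleton a hmem]
  exact ⟨hcross, (eq_div_iff hne).mpr hcross⟩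

theorem stmt_18 {L : Type*} [BooleanAlgebra L] [Fintype L] (t : L)
    (Q R' : L → ℂ) (hQ : IsPreProb Q) (hR' : IsPreProb R')
    (a : ℂ → ℂ) (hadd : ∀ x y : ℂ, a (x + y) = a x + a y)
    (hsync : ∀ u : L, u ≤ t → a (R' u) = Q u)
    (hdim : Module.finrank ℚ (Submodule.span ℚ (R' '' {u : L | u ≤ t})) ≤ 1)
    (s' : L) (hs' : s' ≤ t) (hne : R' s' ≠ 0) :
    ∀ u : L, u ≤ t → Q u * R' s' = R' u * Q s' ∧ Q u = R' u * Q s' / R' s' := by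
  have := FiniteDimensional.span_of_finite ℚ (Set.toFinite (R' '' {u : L | u ≤ t}))
  exact stmt_18_general {u | u ≤ t} Q R' (AddMonoidHom.mk' a hadd).toRatLinearMap hsync
    (by rw [← Module.finrank_eq_rank]; exact_mod_cast hdim) s' hs' hne
end

section
/- Let L be a finite Boolean algebra and Q a pre-probability on L with Q(⊤) = 1. Let s₁, …, sₙ ∈ L be pairwise disjoint with s₁ ∨ ⋯ ∨ sₙ = ⊤, fix an index k, and assume Q(sⱼ) ≠ 0 for every j ≠ k. Let R' : L → ℂ be a pre-probability and a : ℂ → ℂ a map with a(x + y) = a(x) + a(y) for all x, y such that a(R'(u)) = Q(u) for every u ≤ sₖ; assume the ℚ-linear span of {R'(u) : u ≤ sₖ} has dimension at most 1 over ℚ, and let s' ≤ sₖ with R'(s') ≠ 0. Then for every s ∈ L, Q(s) = Σ_{j ≠ k} (Q(s ∧ sⱼ)/Q(sⱼ)) · Q(sⱼ) + R'(s ∧ sₖ) · Q(s')/R'(s'). -/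
/-!
Every value `R u` with `u ≤ p k` is a rational multiple of one fixed number, and an additive map
is `ℚ`-linear, so on the block `p k` the values of `Q = a ∘ R` are proportional to those of `R`.
The reference statement `s'` supplies the constant of proportionality `Q s' / R s'`.
-/

theorem linearMap_mul_comm_of_mem_isPrincipal {K V A : Type*} [CommSemiring K]
    [AddCommMonoid V] [Module K V] [CommSemiring A] [Algebra K A] (f g : V →ₗ[K] A)
    {W : Submodule K V} (hW : W.IsPrincipal) {x y : V} (hx : x ∈ W) (hy : y ∈ W) :
    f x * g y = f y * g x := by
  obtain ⟨v, rfl⟩ := hW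
  obtain ⟨c, rfl⟩ := Submodule.mem_span_singleton.1 hx
  obtain ⟨d, rfl⟩ := Submodule.mem_span_singleton.1 hy
  simp only [map_smul, smul_mul_smul_comm, mul_comm c d]

theorem addMonoidHom_apply_eq_mul_div_of_rank_span_le_one {F : Type*} [Field F] [Algebra ℚ F]
    (a : F →+ F) {S : Set F} (hS : Module.rank ℚ (Submodule.span ℚ S) ≤ 1) {x y : F}
    (hx : x ∈ S) (hy : y ∈ S) (hy₀ : y ≠ 0) : a x = x * a y / y := by
  have hprincipal := (Submodule.rank_le_one_iff_isPrincipal _).1 hS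
  rw [eq_div_iff hy₀, mul_comm x]
  exact linearMap_mul_comm_of_mem_isPrincipal a.toRatLinearMap LinearMap.id hprincipal
    (Submodule.subset_span hx) (Submodule.subset_span hy)

namespace IsPreProb

variable {L ι : Type*} [BooleanAlgebra L] {Q : L → ℂ} {I : Finset ι} {p : ι → L}

theorem apply_finsetSup (hQ : IsPreProb Q) (hdisj : (I : Set ι).PairwiseDisjoint p) :
    Q (I.sup p) = ∑ j ∈ I, Q (p j) := by
  induction I using Finset.cons_induction with
  | empty => exact hQ.1
  | cons i I hi ih =>
    rw [Finset.coe_cons, Set.pairwiseDisjoint_insert_of_notMem hi] at hdisj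
    have hi_sup : Disjoint (p i) (I.sup p) := Finset.disjoint_sup_right.2 hdisj.2
    rw [Finset.sup_cons, Finset.sum_cons, hQ.2 _ _ hi_sup.eq_bot, ih hdisj.1]

theorem eq_sum_apply_inf (hQ : IsPreProb Q) (hdisj : (I : Set ι).PairwiseDisjoint p)
    {s : L} (hs : s ≤ I.sup p) : Q s = ∑ j ∈ I, Q (s ⊓ p j) := by
  rw [← hQ.apply_finsetSup (hdisj.mono fun _ => inf_le_right), ← Finset.sup_inf_distrib_left,
    inf_eq_left.2 hs]

theorem eq_sum_cond_mul_add [DecidableEq ι] (hQ : IsPreProb Q)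
    (hdisj : (I : Set ι).PairwiseDisjoint p) {k : ι} (hk : k ∈ I)
    (hne : ∀ j ∈ I.erase k, Q (p j) ≠ 0) {s : L} (hs : s ≤ I.sup p) :
    Q s = ∑ j ∈ I.erase k, Q (s ⊓ p j) / Q (p j) * Q (p j) + Q (s ⊓ p k) := by
  rw [hQ.eq_sum_apply_inf hdisj hs, ← Finset.sum_erase_add _ _ hk]
  congr 1
  exact Finset.sum_congr rfl fun j hj => (div_mul_cancel₀ _ (hne j hj)).symm

end IsPreProb

theorem stmt_19_general {L ι : Type*} [BooleanAlgebra L] [DecidableEq ι]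
    {Q : L → ℂ} (hQ : IsPreProb Q) {I : Finset ι} {p : ι → L}
    (hdisj : (I : Set ι).PairwiseDisjoint p) {k : ι} (hk : k ∈ I)
    (hne : ∀ j ∈ I.erase k, Q (p j) ≠ 0)
    {R : L → ℂ} (a : ℂ →+ ℂ) (hsync : ∀ u ≤ p k, a (R u) = Q u)
    (hdim : Module.rank ℚ (Submodule.span ℚ (R '' {u | u ≤ p k})) ≤ 1)
    {s' : L} (hs' : s' ≤ p k) (hne' : R s' ≠ 0) {s : L} (hs : s ≤ I.sup p) :
    Q s = ∑ j ∈ I.erase k, Q (s ⊓ p j) / Q (p j) * Q (p j) + R (s ⊓ p k) * Q s' / R s' := by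
  have hblock : Q (s ⊓ p k) = R (s ⊓ p k) * Q s' / R s' := by
    rw [← hsync _ inf_le_right, ← hsync _ hs']
    exact addMonoidHom_apply_eq_mul_div_of_rank_span_le_one a hdim
      (Set.mem_image_of_mem R inf_le_right) (Set.mem_image_of_mem R hs') hne'
  rw [← hblock]
  exact hQ.eq_sum_cond_mul_add hdisj hk hne hs

theorem stmt_19 {L : Type*} [BooleanAlgebra L] [Fintype L]
    (Q : L → ℂ) (hQ : IsPreProb Q) (htop : Q ⊤ = 1)
    (n : ℕ) (p : Fin n → L)
    (hdisj : ∀ j k : Fin n, j ≠ k → p j ⊓ p k = ⊥)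
    (hcover : Finset.univ.sup p = ⊤)
    (k : Fin n) (hne : ∀ j : Fin n, j ≠ k → Q (p j) ≠ 0)
    (R' : L → ℂ) (hR' : IsPreProb R')
    (a : ℂ → ℂ) (hadd : ∀ x y : ℂ, a (x + y) = a x + a y)
    (hsync : ∀ u : L, u ≤ p k → a (R' u) = Q u)
    (hdim : Module.finrank ℚ (Submodule.span ℚ (R' '' {u : L | u ≤ p k})) ≤ 1)
    (s' : L) (hs' : s' ≤ p k) (hne' : R' s' ≠ 0) :
    ∀ s : L, Q s =
      (∑ j ∈ Finset.univ.filter (fun j : Fin n => j ≠ k),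
        (Q (s ⊓ p j) / Q (p j)) * Q (p j)) +
      R' (s ⊓ p k) * Q s' / R' s' := by
  intro s
  have : Module.Finite ℚ (Submodule.span ℚ (R' '' {u : L | u ≤ p k})) :=
    Module.Finite.span_of_finite ℚ (Set.toFinite _)
  rw [Finset.filter_ne']
  exact stmt_19_general hQ (fun i _ j _ hij => disjoint_iff.2 (hdisj i j hij)) (Finset.mem_univ k)
    (fun j hj => hne j (Finset.ne_of_mem_erase hj)) (AddMonoidHom.mk' a hadd) hsync
    (by rwa [← Module.finrank_eq_rank, Nat.cast_le_one]) hs' hne' (hcover ▸ le_top)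
end
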